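/- Let ψ∈C²(Ω) be Lipschitz continuous on Ω̄ with 0≤ψ≤Q, Δψ=f(ψ) in Ω, ψ=0 on Γ₀, ψ=Q on Γ₁, and ∂_{x₂}ψ≥0 in Ω. Then ψ converges to the one-dimensional solutions at far fields in C¹_loc: for every compact K⊂(0,1), sup_{x₂∈K}(|ψ(x₁,x₂)−φ̄₁(x₂)| + |∂_{x₂}ψ(x₁,x₂)−φ̄₁'(x₂)|) → 0 as x₁→−∞, and for every compact K⊂(a,b), sup_{x₂∈K}(|ψ(x₁,x₂)−φ̄_{b−a}(x₂−a)| + |∂_{x₂}ψ(x₁,x₂)−φ̄_{b−a}'(x₂−a)|) → 0 as x₁→+∞. -/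

import Mathlib

open Real Set MeasureTheory

noncomputable section

/-- Partial derivative in the `x₁` direction. -/
def pd1 (φ : ℝ × ℝ → ℝ) (x : ℝ × ℝ) : ℝ := fderiv ℝ φ x (1, 0)

/-- Partial derivative in the `x₂` direction. -/
def pd2 (φ : ℝ × ℝ → ℝ) (x : ℝ × ℝ) : ℝ := fderiv ℝ φ x (0, 1)

/-- The Laplacian `Δφ = ∂²φ/∂x₁² + ∂²φ/∂x₂²`. -/
def lap (φ : ℝ × ℝ → ℝ) (x : ℝ × ℝ) : ℝ := pd1 (pd1 φ) x + pd2 (pd2 φ) x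

/-- `φ` solves the boundary value problem `φ'' = f(φ)` on `(0,d)`, `φ(0) = 0`,
`φ(d) = Q`, `0 < φ < Q` on `(0,d)`, with `φ ∈ C²((0,d)) ∩ C¹([0,d])`. -/
def IsBVPSol (Q : ℝ) (f : ℝ → ℝ) (d : ℝ) (φ : ℝ → ℝ) : Prop :=
  ContDiffOn ℝ 1 φ (Set.Icc 0 d) ∧ ContDiffOn ℝ 2 φ (Set.Ioo 0 d) ∧
  (∀ x ∈ Set.Ioo (0 : ℝ) d, deriv (deriv φ) x = f (φ x)) ∧
  φ 0 = 0 ∧ φ d = Q ∧ (∀ x ∈ Set.Ioo (0 : ℝ) d, 0 < φ x ∧ φ x < Q)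

/-!
The stream function `ψ` is compared with the one-dimensional profile `φ` through its lower limit
`u y = liminf ψ (x, y)` far downstream. On a box that is long enough, the vertical sides have no
influence at the centre, so every `G` with `G'' > f u` that lies below `u` at the ends of an
interval stays below `ψ` far out, up to a small error, and hence below `u`: the lower limit is a
supersolution in the sense of comparison. Because `f` is decreasing there is no maximum principle
for `v'' = f v`, and `φ ≤ u` is obtained by sliding instead: the translates `φ (· - t)` start below
`u` at `t = d` and can be moved down to `t = 0` without ever touching it. The reflection
`ψ ↦ Q - ψ (x, d - y)`, `f ↦ -f (Q - ·)` keeps `f` decreasing, and turns this lower bound into the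
matching upper bound. Finally `Δ (ψ - φ)` is bounded, so the interior gradient estimate upgrades the
uniform convergence to `C¹` convergence on compact subsets. The upstream end is the downstream end
after `x ↦ -x`.
-/

open Filter Topology Metric

/-- The second derivative of a function of one real variable at a point, as a relation: `g` is
differentiable near `x` and its derivative has derivative `A` at `x`. Unlike `deriv (deriv g) x = A`
it carries the differentiability. -/
def HasSecondDerivAt (g : ℝ → ℝ) (A x : ℝ) : Prop :=
  ∃ g' : ℝ → ℝ, (∀ᶠ s in 𝓝 x, HasDerivAt g (g' s) s) ∧ HasDerivAt g' A x

namespace HasSecondDerivAt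

variable {g k : ℝ → ℝ} {A B x : ℝ}

lemma add (hg : HasSecondDerivAt g A x) (hk : HasSecondDerivAt k B x) :
    HasSecondDerivAt (fun s => g s + k s) (A + B) x := by
  obtain ⟨g', hg, hg'⟩ := hg
  obtain ⟨k', hk, hk'⟩ := hk
  refine ⟨fun s => g' s + k' s, ?_, hg'.add hk'⟩
  filter_upwards [hg, hk] with s hgs hks using hgs.add hks

lemma const_mul (c : ℝ) (hg : HasSecondDerivAt g A x) :
    HasSecondDerivAt (fun s => c * g s) (c * A) x := by
  obtain ⟨g', hg, hg'⟩ := hg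
  exact ⟨fun s => c * g' s, hg.mono fun s hs => hs.const_mul c, hg'.const_mul c⟩

lemma sub (hg : HasSecondDerivAt g A x) (hk : HasSecondDerivAt k B x) :
    HasSecondDerivAt (fun s => g s - k s) (A - B) x := by
  simpa [sub_eq_add_neg] using hg.add (hk.const_mul (-1))

lemma quadratic (a b c x₀ x : ℝ) :
    HasSecondDerivAt (fun s => a * (s - x₀) ^ 2 + b * (s - x₀) + c) (2 * a) x := by
  refine ⟨fun s => 2 * a * (s - x₀) + b, Eventually.of_forall fun s => ?_, ?_⟩
  · have hid : HasDerivAt (fun s => s - x₀) 1 s := (hasDerivAt_id s).sub_const x₀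
    refine ((((hid.fun_pow 2).const_mul a).fun_add (hid.const_mul b)).add_const c).congr_deriv ?_
    norm_num
    ring
  · simpa using (((hasDerivAt_id x).sub_const x₀).const_mul (2 * a)).add_const b

lemma const (c x : ℝ) : HasSecondDerivAt (fun _ => c) 0 x := by
  simpa using quadratic 0 0 c 0 x

lemma comp_const_sub (c : ℝ) (hg : HasSecondDerivAt g A (c - x)) :
    HasSecondDerivAt (fun s => g (c - s)) A x := by
  obtain ⟨g', hg, hg'⟩ := hg
  refine ⟨fun s => -g' (c - s), ?_, by simpa using (hg'.comp_const_sub c x).fun_neg⟩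
  have hcont : ContinuousAt (fun s => c - s) x := by fun_prop
  filter_upwards [hcont.eventually hg] with s hs using hs.comp_const_sub c s

lemma comp_const_add (c : ℝ) (hg : HasSecondDerivAt g A (c + x)) :
    HasSecondDerivAt (fun s => g (c + s)) A x := by
  obtain ⟨g', hg, hg'⟩ := hg
  refine ⟨fun s => g' (c + s), ?_, hg'.comp_const_add c x⟩
  have hcont : ContinuousAt (fun s => c + s) x := by fun_prop
  filter_upwards [hcont.eventually hg] with s hs using hs.comp_const_add c s

lemma comp_sub_const (c : ℝ) (hg : HasSecondDerivAt g A (x - c)) :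
    HasSecondDerivAt (fun s => g (s - c)) A x := by
  rw [sub_eq_neg_add] at hg
  simpa only [sub_eq_neg_add] using hg.comp_const_add (-c)

lemma differentiableAt (hg : HasSecondDerivAt g A x) : DifferentiableAt ℝ g x :=
  let ⟨_, hg, _⟩ := hg
  hg.self_of_nhds.differentiableAt

lemma deriv_deriv (hg : HasSecondDerivAt g A x) : deriv (deriv g) x = A := by
  obtain ⟨g', hg, hg'⟩ := hg
  have hderiv : deriv g =ᶠ[𝓝 x] g' := hg.mono fun s hs => hs.deriv
  rw [hderiv.deriv_eq, hg'.deriv]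

-- If `A < 0`, then `x` is a local maximum as well, so `g` is locally constant and `A = 0`.
lemma nonneg_of_isLocalMin (hg : HasSecondDerivAt g A x) (hmin : IsLocalMin g x) : 0 ≤ A := by
  by_contra! hA
  have hmax : IsLocalMax g x :=
    isLocalMax_of_deriv_deriv_neg (hg.deriv_deriv.trans_lt hA) hmin.deriv_eq_zero
      hg.differentiableAt.continuousAt
  have hconst : g =ᶠ[𝓝 x] fun _ => g x := by
    filter_upwards [hmin, hmax] with s hle hge using le_antisymm hge hle
  have hA0 : deriv (deriv g) x = 0 := by
    rw [hconst.deriv.deriv_eq]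
    simp
  exact hA.ne (hg.deriv_deriv.symm.trans hA0)

end HasSecondDerivAt

lemma hasSecondDerivAt_deriv_deriv {g : ℝ → ℝ} {x : ℝ} (hg : ContDiffAt ℝ 2 g x) :
    HasSecondDerivAt g (deriv (deriv g) x) x := by
  refine ⟨deriv g, ?_, ?_⟩
  · filter_upwards [hg.eventually (by simp)] with s hs
    exact (hs.differentiableAt (by simp)).hasDerivAt
  · have hfderiv : DifferentiableAt ℝ (fderiv ℝ g) x :=
      (hg.fderiv_right (m := 1) (by norm_num)).differentiableAt (by simp)
    exact (hfderiv.clm_apply (differentiableAt_const (1 : ℝ))).hasDerivAt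

/-- The Laplacian of a function on the plane at a point, as a relation: `W` has second derivatives
at `z` along both coordinate lines, and their sum is `L`. Only the two coordinate slices through `z`
matter, so no joint regularity is required. -/
def HasLaplacianAt (W : ℝ × ℝ → ℝ) (L : ℝ) (z : ℝ × ℝ) : Prop :=
  ∃ A B : ℝ, HasSecondDerivAt (fun s => W (s, z.2)) A z.1 ∧
    HasSecondDerivAt (fun s => W (z.1, s)) B z.2 ∧ A + B = L

namespace HasLaplacianAt

variable {V W : ℝ × ℝ → ℝ} {L M : ℝ} {z : ℝ × ℝ}

lemma add (hV : HasLaplacianAt V L z) (hW : HasLaplacianAt W M z) :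
    HasLaplacianAt (fun w => V w + W w) (L + M) z := by
  obtain ⟨A, B, hA, hB, rfl⟩ := hV
  obtain ⟨A', B', hA', hB', rfl⟩ := hW
  exact ⟨_, _, hA.add hA', hB.add hB', by ring⟩

lemma const_mul (c : ℝ) (hW : HasLaplacianAt W L z) :
    HasLaplacianAt (fun w => c * W w) (c * L) z := by
  obtain ⟨A, B, hA, hB, rfl⟩ := hW
  exact ⟨_, _, hA.const_mul c, hB.const_mul c, by ring⟩

lemma neg (hW : HasLaplacianAt W L z) : HasLaplacianAt (fun w => -W w) (-L) z := by
  simpa using hW.const_mul (-1)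

lemma sub (hV : HasLaplacianAt V L z) (hW : HasLaplacianAt W M z) :
    HasLaplacianAt (fun w => V w - W w) (L - M) z := by
  simpa [sub_eq_add_neg] using hV.add hW.neg

lemma of_fst {g : ℝ → ℝ} (hg : HasSecondDerivAt g L z.1) : HasLaplacianAt (fun w => g w.1) L z :=
  ⟨L, 0, hg, HasSecondDerivAt.const (g z.1) z.2, add_zero L⟩

lemma of_snd {g : ℝ → ℝ} (hg : HasSecondDerivAt g L z.2) : HasLaplacianAt (fun w => g w.2) L z :=
  ⟨0, L, HasSecondDerivAt.const (g z.2) z.1, hg, zero_add L⟩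

lemma comp_neg_fst (hW : HasLaplacianAt W L (-z.1, z.2)) :
    HasLaplacianAt (fun w => W (-w.1, w.2)) L z := by
  obtain ⟨A, B, hA, hB, hAB⟩ := hW
  simp only [← zero_sub z.1] at hA
  exact ⟨A, B, by simpa only [zero_sub] using hA.comp_const_sub 0, hB, hAB⟩

lemma comp_const_sub_snd (c : ℝ) (hW : HasLaplacianAt W L (z.1, c - z.2)) :
    HasLaplacianAt (fun w => W (w.1, c - w.2)) L z := by
  obtain ⟨A, B, hA, hB, hAB⟩ := hW
  exact ⟨A, B, hA, hB.comp_const_sub c, hAB⟩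

lemma comp_const_add_snd (c : ℝ) (hW : HasLaplacianAt W L (z.1, c + z.2)) :
    HasLaplacianAt (fun w => W (w.1, c + w.2)) L z := by
  obtain ⟨A, B, hA, hB, hAB⟩ := hW
  exact ⟨A, B, hA, hB.comp_const_add c, hAB⟩

lemma differentiableAt_snd (hW : HasLaplacianAt W L z) :
    DifferentiableAt ℝ (fun s => W (z.1, s)) z.2 :=
  let ⟨_, _, _, hB, _⟩ := hW
  hB.differentiableAt

lemma nonneg_of_isLocalMin (hW : HasLaplacianAt W L z) (hmin : IsLocalMin W z) : 0 ≤ L := by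
  obtain ⟨A, B, hA, hB, rfl⟩ := hW
  have hfst : ContinuousAt (fun s : ℝ => (s, z.2)) z.1 := by fun_prop
  have hsnd : ContinuousAt (fun s : ℝ => (z.1, s)) z.2 := by fun_prop
  exact add_nonneg (hA.nonneg_of_isLocalMin (hfst.eventually hmin))
    (hB.nonneg_of_isLocalMin (hsnd.eventually hmin))

end HasLaplacianAt

section LapOfContDiff

variable {ψ : ℝ × ℝ → ℝ} {z : ℝ × ℝ}

lemma hasDerivAt_pd1 (hψ : DifferentiableAt ℝ ψ z) :
    HasDerivAt (fun s => ψ (s, z.2)) (pd1 ψ z) z.1 :=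
  hψ.hasFDerivAt.comp_hasDerivAt z.1 ((hasDerivAt_id z.1).prodMk (hasDerivAt_const z.1 z.2))

lemma hasDerivAt_pd2 (hψ : DifferentiableAt ℝ ψ z) :
    HasDerivAt (fun s => ψ (z.1, s)) (pd2 ψ z) z.2 :=
  hψ.hasFDerivAt.comp_hasDerivAt z.2 ((hasDerivAt_const z.2 z.1).prodMk (hasDerivAt_id z.2))

lemma hasLaplacianAt_lap (hψ : ContDiffAt ℝ 2 ψ z) : HasLaplacianAt ψ (lap ψ z) z := by
  have hfderiv : DifferentiableAt ℝ (fderiv ℝ ψ) z :=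
    (hψ.fderiv_right (m := 1) (by norm_num)).differentiableAt (by simp)
  have hev : ∀ᶠ w in 𝓝 z, DifferentiableAt ℝ ψ w :=
    (hψ.eventually (by simp)).mono fun w hw => hw.differentiableAt (by simp)
  have hfst : ContinuousAt (fun s : ℝ => (s, z.2)) z.1 := by fun_prop
  have hsnd : ContinuousAt (fun s : ℝ => (z.1, s)) z.2 := by fun_prop
  refine ⟨pd1 (pd1 ψ) z, pd2 (pd2 ψ) z, ⟨fun s => pd1 ψ (s, z.2), ?_, ?_⟩,
    ⟨fun s => pd2 ψ (z.1, s), ?_, ?_⟩, rfl⟩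
  · filter_upwards [hfst.eventually hev] with s hs using hasDerivAt_pd1 hs
  · exact hasDerivAt_pd1 (hfderiv.clm_apply (differentiableAt_const _))
  · filter_upwards [hsnd.eventually hev] with s hs using hasDerivAt_pd2 hs
  · exact hasDerivAt_pd2 (hfderiv.clm_apply (differentiableAt_const _))

end LapOfContDiff

section MinimumPrinciple

variable {W : ℝ × ℝ → ℝ}

lemma le_of_laplacian_neg {S : Set (ℝ × ℝ)} {c : ℝ} (hS : IsCompact S) (hW : ContinuousOn W S)
    (hlap : ∀ z ∈ interior S, ∃ L < 0, HasLaplacianAt W L z) (hbdry : ∀ z ∈ frontier S, c ≤ W z) :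
    ∀ z ∈ S, c ≤ W z := by
  intro z hz
  obtain ⟨w, hw, hmin⟩ := hS.exists_isMinOn ⟨z, hz⟩ hW
  refine le_trans (hbdry w ⟨subset_closure hw, fun hwint => ?_⟩) (hmin hz)
  obtain ⟨L, hL, hWL⟩ := hlap w hwint
  exact hL.not_ge (hWL.nonneg_of_isLocalMin (hmin.isLocalMin (mem_interior_iff_mem_nhds.1 hwint)))

-- Apply the minimum principle to `W z + k * (z.1 - x₀) ^ 2`; the added term vanishes on the
-- vertical axis of the box and absorbs the slack `k * R ^ 2` allowed on its vertical sides.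
lemma le_of_laplacian_lt_on_box {x₀ R p q k c : ℝ} (hR : 0 ≤ R) (hk : 0 ≤ k)
    (hW : ContinuousOn W (Icc (x₀ - R) (x₀ + R) ×ˢ Icc p q))
    (hlap : ∀ z ∈ Ioo (x₀ - R) (x₀ + R) ×ˢ Ioo p q, ∃ L < -(2 * k), HasLaplacianAt W L z)
    (hside : ∀ y ∈ Icc p q, c - k * R ^ 2 ≤ W (x₀ - R, y) ∧ c - k * R ^ 2 ≤ W (x₀ + R, y))
    (hbase : ∀ x ∈ Icc (x₀ - R) (x₀ + R), c ≤ W (x, p) ∧ c ≤ W (x, q)) :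
    ∀ y ∈ Icc p q, c ≤ W (x₀, y) := by
  intro y hy
  have hx₀ : x₀ ∈ Icc (x₀ - R) (x₀ + R) := ⟨by linarith, by linarith⟩
  have hpq : p ≤ q := hy.1.trans hy.2
  suffices h : c ≤ W (x₀, y) + k * (x₀ - x₀) ^ 2 by simpa using h
  refine le_of_laplacian_neg (W := fun z => W z + k * (z.1 - x₀) ^ 2)
    (isCompact_Icc.prod isCompact_Icc) (hW.add (Continuous.continuousOn (by fun_prop))) ?_ ?_
    (x₀, y) ⟨hx₀, hy⟩
  · rw [interior_prod_eq, interior_Icc, interior_Icc]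
    intro z hz
    obtain ⟨L, hL, hWL⟩ := hlap z hz
    refine ⟨L + 2 * k, by linarith, hWL.add
      (HasLaplacianAt.of_fst (g := fun s => k * (s - x₀) ^ 2) ?_)⟩
    simpa using HasSecondDerivAt.quadratic k 0 0 x₀ z.1
  · rw [frontier_prod_eq, frontier_Icc hpq, frontier_Icc (hx₀.1.trans hx₀.2), closure_Icc,
      closure_Icc]
    rintro ⟨x, y⟩ (⟨hx, rfl | rfl⟩ | ⟨rfl | rfl, hy⟩) <;> dsimp only
    · exact (hbase x hx).1.trans (le_add_of_nonneg_right (by positivity))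
    · exact (hbase x hx).2.trans (le_add_of_nonneg_right (by positivity))
    · linear_combination (hside y hy).1
    · linear_combination (hside y hy).2

end MinimumPrinciple

section InteriorGradientEstimate

variable {W : ℝ × ℝ → ℝ} {M N r : ℝ}

-- The concavity of the barrier `m * s * (2 * r - s) + N / 2 * s * (r - s)` exceeds `N` by the slack
-- `2 * m` that the box comparison needs, and `m * r ^ 2 = M` makes it dominate `W` at height `r`.
lemma le_mul_of_neg_lt_laplacian {x₀ : ℝ} (hr : 0 < r) (hN : 0 ≤ N)
    (hW : ContinuousOn W (Icc (x₀ - r) (x₀ + r) ×ˢ Icc 0 r))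
    (hM : ∀ z ∈ Icc (x₀ - r) (x₀ + r) ×ˢ Icc 0 r, W z ≤ M)
    (hlap : ∀ z ∈ Ioo (x₀ - r) (x₀ + r) ×ˢ Ioo 0 r, ∃ L > -N, HasLaplacianAt W L z)
    (hzero : ∀ x ∈ Icc (x₀ - r) (x₀ + r), W (x, 0) = 0) :
    ∀ y ∈ Icc 0 r, W (x₀, y) ≤ (2 * M / r + r * N / 2) * y := by
  intro y hy
  have hx₀ : x₀ ∈ Icc (x₀ - r) (x₀ + r) := ⟨by linarith, by linarith⟩
  have hM0 : 0 ≤ M := (hzero x₀ hx₀).symm.le.trans (hM (x₀, 0) ⟨hx₀, le_rfl, hr.le⟩)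
  set m := M / r ^ 2
  have hm0 : 0 ≤ m := by positivity
  have hmr : m * r ^ 2 = M := div_mul_cancel₀ M (by positivity)
  have hslope : 2 * M / r + r * N / 2 = 2 * m * r + N * r / 2 := by
    rw [← hmr]
    field_simp
  let β : ℝ → ℝ := fun s => -(m + N / 2) * (s - 0) ^ 2 + (2 * m * r + N * r / 2) * (s - 0) + 0
  have hβ (s : ℝ) : β s = m * (s * (2 * r - s)) + N / 2 * (s * (r - s)) := by
    simp only [β]
    ring
  have hβ0 : ∀ s ∈ Icc 0 r, 0 ≤ β s := fun s hs => by
    have hs0 := hs.1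
    have hsr : 0 ≤ r - s := sub_nonneg.2 hs.2
    have hs2r : 0 ≤ 2 * r - s := by linarith
    rw [hβ]
    positivity
  have hbarrier : 0 ≤ β y - W (x₀, y) := by
    refine le_of_laplacian_lt_on_box (W := fun z => β z.2 - W z) hr.le hm0
      (ContinuousOn.sub (Continuous.continuousOn (by fun_prop)) hW) (fun z hz => ?_)
      (fun s hs => ?_) (fun x hx => ?_) y hy
    · obtain ⟨L, hL, hWL⟩ := hlap z hz
      exact ⟨_, by linarith,
        (HasLaplacianAt.of_snd (HasSecondDerivAt.quadratic _ _ _ _ _)).sub hWL⟩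
    · have hl := hM (x₀ - r, s) ⟨left_mem_Icc.2 (hx₀.1.trans hx₀.2), hs⟩
      have hr := hM (x₀ + r, s) ⟨right_mem_Icc.2 (hx₀.1.trans hx₀.2), hs⟩
      constructor <;> linarith [hβ0 s hs]
    · have htop := hM (x, r) ⟨hx, right_mem_Icc.2 hr.le⟩
      simp only [hβ, hzero x hx]
      constructor <;> linarith
  calc W (x₀, y) ≤ β y := sub_nonneg.1 hbarrier
    _ = (2 * m * r + N * r / 2) * y - (m + N / 2) * y ^ 2 := by simp only [β]; ring
    _ ≤ (2 * M / r + r * N / 2) * y := by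
      rw [hslope]
      exact sub_le_self _ (by positivity)

lemma le_of_hasDerivAt_of_le_mul {g : ℝ → ℝ} {q c : ℝ} (hr : 0 < r) (hg : HasDerivAt g q 0)
    (hg0 : g 0 = 0) (hle : ∀ y ∈ Icc 0 r, g y ≤ c * y) : q ≤ c := by
  refine le_of_tendsto hg.tendsto_slope_zero_right ?_
  filter_upwards [Ioo_mem_nhdsGT hr] with t ht
  simpa [hg0, inv_mul_le_iff₀ ht.1, mul_comm t] using hle t ⟨ht.1.le, ht.2.le⟩

-- The odd part of `W` about the horizontal line through `z` vanishes on that line and has the same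
-- vertical derivative at `z`, so the barrier above the line applies to it.
lemma deriv_le_of_laplacian_bound {z : ℝ × ℝ} {q : ℝ} (hr : 0 < r)
    (hW : ContinuousOn W (closedBall z r)) (hM : ∀ w ∈ closedBall z r, |W w| ≤ M)
    (hlap : ∀ w ∈ ball z r, ∃ L, |L| < N ∧ HasLaplacianAt W L w)
    (hq : HasDerivAt (fun s => W (z.1, s)) q z.2) : q ≤ 2 * M / r + r * N / 2 := by
  obtain ⟨L₀, hL₀, -⟩ := hlap z (mem_ball_self hr)
  obtain ⟨x₀, y₀⟩ := z
  simp only [← closedBall_prod_same, ← ball_prod_same, Real.closedBall_eq_Icc, Real.ball_eq_Ioo]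
    at hW hM hlap
  have hadd {x y : ℝ} (h : (x, y) ∈ Icc (x₀ - r) (x₀ + r) ×ˢ Icc 0 r) :
      (x, y₀ + y) ∈ Icc (x₀ - r) (x₀ + r) ×ˢ Icc (y₀ - r) (y₀ + r) :=
    ⟨h.1, by linarith [h.2.1], by linarith [h.2.2]⟩
  have hsub {x y : ℝ} (h : (x, y) ∈ Icc (x₀ - r) (x₀ + r) ×ˢ Icc 0 r) :
      (x, y₀ - y) ∈ Icc (x₀ - r) (x₀ + r) ×ˢ Icc (y₀ - r) (y₀ + r) :=
    ⟨h.1, by linarith [h.2.2], by linarith [h.2.1]⟩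
  let V : ℝ × ℝ → ℝ := fun w => 1 / 2 * (W (w.1, y₀ + w.2) - W (w.1, y₀ - w.2))
  have hV : ∀ y ∈ Icc 0 r, V (x₀, y) ≤ (2 * M / r + r * N / 2) * y := by
    refine le_mul_of_neg_lt_laplacian hr ((abs_nonneg L₀).trans hL₀.le)
      (continuousOn_const.mul (ContinuousOn.sub ?_ ?_)) (fun w hw => ?_) (fun w hw => ?_)
      fun x _ => by simp [V]
    · exact hW.comp (by fun_prop) fun w hw => hadd hw
    · exact hW.comp (by fun_prop) fun w hw => hsub hw
    · have h₁ := (abs_le.1 (hM _ (hadd hw))).2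
      have h₂ := (abs_le.1 (hM _ (hsub hw))).1
      simp only [V]
      linarith
    · obtain ⟨hx, hy⟩ := hw
      obtain ⟨L₁, hL₁, hW₁⟩ := hlap (w.1, y₀ + w.2) ⟨hx, by linarith [hy.1], by linarith [hy.2]⟩
      obtain ⟨L₂, hL₂, hW₂⟩ := hlap (w.1, y₀ - w.2) ⟨hx, by linarith [hy.2], by linarith [hy.1]⟩
      refine ⟨_, ?_, ((hW₁.comp_const_add_snd y₀).sub
        (hW₂.comp_const_sub_snd y₀)).const_mul (1 / 2)⟩
      linarith [(abs_lt.1 hL₁).1, (abs_lt.1 hL₂).2]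
  refine le_of_hasDerivAt_of_le_mul hr ?_ (by simp [V]) hV
  have hdadd : HasDerivAt (fun s => W (x₀, y₀ + s)) q 0 :=
    HasDerivAt.comp_const_add y₀ 0 (by simpa using hq)
  have hdsub : HasDerivAt (fun s => W (x₀, y₀ - s)) (-q) 0 :=
    HasDerivAt.comp_const_sub y₀ 0 (by simpa using hq)
  exact ((hdadd.fun_sub hdsub).const_mul (1 / 2)).congr_deriv (by ring)

lemma abs_deriv_le_of_laplacian_bound {z : ℝ × ℝ} {q : ℝ} (hr : 0 < r)
    (hW : ContinuousOn W (closedBall z r)) (hM : ∀ w ∈ closedBall z r, |W w| ≤ M)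
    (hlap : ∀ w ∈ ball z r, ∃ L, |L| < N ∧ HasLaplacianAt W L w)
    (hq : HasDerivAt (fun s => W (z.1, s)) q z.2) : |q| ≤ 2 * M / r + r * N / 2 := by
  refine abs_le'.2 ⟨deriv_le_of_laplacian_bound hr hW hM hlap hq,
    deriv_le_of_laplacian_bound hr hW.neg (fun w hw => (abs_neg (W w)).trans_le (hM w hw))
      (fun w hw => ?_) hq.fun_neg⟩
  obtain ⟨L, hL, hWL⟩ := hlap w hw
  exact ⟨-L, by rwa [abs_neg], hWL.neg⟩

end InteriorGradientEstimate

namespace IsBVPSol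

variable {f φ : ℝ → ℝ} {Q d : ℝ}

lemma continuousOn (hφ : IsBVPSol Q f d φ) : ContinuousOn φ (Icc 0 d) :=
  hφ.1.continuousOn

lemma hasSecondDerivAt (hφ : IsBVPSol Q f d φ) {y : ℝ} (hy : y ∈ Ioo 0 d) :
    HasSecondDerivAt φ (f (φ y)) y := by
  obtain ⟨-, hC2, hode, -⟩ := hφ
  rw [← hode y hy]
  exact hasSecondDerivAt_deriv_deriv (hC2.contDiffAt (isOpen_Ioo.mem_nhds hy))

lemma apply_zero (hφ : IsBVPSol Q f d φ) : φ 0 = 0 :=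
  hφ.2.2.2.1

lemma mem_Ioo (hφ : IsBVPSol Q f d φ) {y : ℝ} (hy : y ∈ Ioo 0 d) : φ y ∈ Ioo 0 Q :=
  hφ.2.2.2.2.2 y hy

lemma mem_Icc (hφ : IsBVPSol Q f d φ) (hQ : 0 ≤ Q) {y : ℝ} (hy : y ∈ Icc 0 d) :
    φ y ∈ Icc 0 Q := by
  obtain ⟨-, -, -, h0, hd, hmem⟩ := hφ
  rcases hy.1.eq_or_lt with rfl | hy0
  · exact ⟨h0.ge, h0.trans_le hQ⟩
  rcases hy.2.eq_or_lt with rfl | hyd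
  · exact ⟨hQ.trans hd.ge, hd.le⟩
  exact Ioo_subset_Icc_self (hmem y ⟨hy0, hyd⟩)

lemma pos (hφ : IsBVPSol Q f d φ) (hd : 0 < d) : 0 < Q :=
  have hmid := hφ.mem_Ioo ⟨half_pos hd, half_lt_self hd⟩
  hmid.1.trans hmid.2

lemma reflect (hφ : IsBVPSol Q f d φ) :
    IsBVPSol Q (fun s => -f (Q - s)) d (fun y => Q - φ (d - y)) := by
  obtain ⟨hC1, hC2, hode, h0, hd, hmem⟩ := hφ
  have hIoo {y : ℝ} (hy : y ∈ Ioo 0 d) : d - y ∈ Ioo 0 d :=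
    ⟨sub_pos.2 hy.2, sub_lt_self d hy.1⟩
  refine ⟨contDiffOn_const.sub (hC1.comp (by fun_prop) fun y hy => ?_),
    contDiffOn_const.sub (hC2.comp (by fun_prop) fun y hy => hIoo hy), fun y hy => ?_,
    by simp [hd], by simp [h0], fun y hy => ?_⟩
  · exact ⟨sub_nonneg.2 hy.2, sub_le_self d hy.1⟩
  · have hderiv : deriv (fun y => Q - φ (d - y)) = fun y => deriv φ (d - y) := by
      funext s
      rw [deriv_const_sub, deriv_comp_const_sub, neg_neg]
    simp only [hderiv, deriv_comp_const_sub, hode _ (hIoo hy), sub_sub_cancel]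
  · obtain ⟨hpos, hlt⟩ := hmem _ (hIoo hy)
    exact ⟨sub_pos.2 hlt, sub_lt_self Q hpos⟩

end IsBVPSol

/-- `u` is a supersolution of the boundary value problem `u'' = f u`, `u 0 = 0`, `u d = Q` in the
sense of comparison: every `G` with `G'' ≥ f u + ε` that lies below `u` at the ends of a subinterval
lies below `u` on it. Since `u` need not be differentiable, lower limits of solutions qualify. -/
structure IsSupersolution (f : ℝ → ℝ) (Q d : ℝ) (u : ℝ → ℝ) : Prop where
  continuousOn : ContinuousOn u (Icc 0 d)
  mem_Icc : ∀ y ∈ Icc 0 d, u y ∈ Icc 0 Q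
  apply_top : u d = Q
  comparison : ∀ ⦃p q ε : ℝ⦄ ⦃G G₂ : ℝ → ℝ⦄, 0 ≤ p → q ≤ d → 0 < ε → ContinuousOn G (Icc p q) →
    (∀ y ∈ Ioo p q, HasSecondDerivAt G (G₂ y) y) → (∀ y ∈ Ioo p q, f (u y) + ε ≤ G₂ y) →
    G p ≤ u p → G q ≤ u q → ∀ y ∈ Icc p q, G y ≤ u y

namespace IsSupersolution

variable {f u φ : ℝ → ℝ} {Q d t c : ℝ}

-- The extra term `η * (s - t) * (s - d)` makes the subsolution strict and vanishes at both ends.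
lemma sub_add_mul_le (hu : IsSupersolution f Q d u) (hφ : IsBVPSol Q f d φ)
    (hf : AntitoneOn f (Icc 0 Q)) (ht : t ∈ Icc 0 d) (hle : ∀ y ∈ Icc t d, φ (y - t) ≤ u y)
    (hc : φ (d - t) + c * (d - t) ≤ Q) : ∀ y ∈ Icc t d, φ (y - t) + c * (y - t) ≤ u y := by
  intro y hy
  have hQ : 0 ≤ Q := hu.apply_top ▸ (hu.mem_Icc d ⟨ht.1.trans ht.2, le_rfl⟩).1
  have hshift {s : ℝ} (hs : s ∈ Icc t d) : s - t ∈ Icc 0 d :=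
    ⟨sub_nonneg.2 hs.1, (sub_le_self s ht.1).trans hs.2⟩
  have hη {η : ℝ} (hη : 0 < η) :
      φ (y - t) + (η * (y - t) ^ 2 + (c - η * (d - t)) * (y - t) + 0) ≤ u y := by
    refine hu.comparison (G := fun s => φ (s - t) +
      (η * (s - t) ^ 2 + (c - η * (d - t)) * (s - t) + 0)) (G₂ := fun s => f (φ (s - t)) + 2 * η)
      ht.1 le_rfl (mul_pos two_pos hη) ?_ (fun s hs => ?_) (fun s hs => ?_) ?_ ?_ y hy
    · exact (hφ.continuousOn.comp (by fun_prop) fun s hs => hshift hs).add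
        (Continuous.continuousOn (by fun_prop))
    · exact ((hφ.hasSecondDerivAt ⟨sub_pos.2 hs.1, by linarith [hs.2, ht.1]⟩).comp_sub_const t).add
        (HasSecondDerivAt.quadratic _ _ _ _ _)
    · have hs' := Ioo_subset_Icc_self hs
      gcongr
      exact hf (hφ.mem_Icc hQ (hshift hs')) (hu.mem_Icc s ⟨ht.1.trans hs'.1, hs'.2⟩) (hle s hs')
    · simpa [hφ.apply_zero] using (hu.mem_Icc t ht).1
    · rw [hu.apply_top]
      linear_combination hc
  have hlim : Tendsto (fun η => φ (y - t) + (η * (y - t) ^ 2 + (c - η * (d - t)) * (y - t) + 0))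
      (𝓝[>] 0) (𝓝 (φ (y - t) + c * (y - t))) :=
    (Continuous.tendsto' (by fun_prop) _ _ (by simp)).mono_left nhdsWithin_le_nhds
  exact le_of_tendsto hlim (eventually_mem_nhdsWithin.mono fun η => hη)

-- Compare with a convex parabola vanishing at `t - ρ`: its curvature beats `f`, and for small `ρ`
-- the linear growth of `u` to the right of `t` keeps it positive at `t`.
lemma pos_of_mul_sub_le (hu : IsSupersolution f Q d u) (hf : AntitoneOn f (Icc 0 Q))
    (ht : t ∈ Ioo 0 d) (hc : 0 < c) (hle : ∀ y ∈ Icc t d, c * (y - t) ≤ u y) : 0 < u t := by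
  set B := |f 0| + 1
  have hB0 : 0 < B := by positivity
  obtain ⟨ρ, hρ0, hρ⟩ := exists_between
    (lt_min ht.1 (lt_min (sub_pos.2 ht.2) (show 0 < c / (2 * B) by positivity)))
  obtain ⟨hρt, hρd, hρc⟩ : ρ < t ∧ ρ < d - t ∧ ρ < c / (2 * B) := by simpa using hρ
  rw [lt_div_iff₀ (by positivity)] at hρc
  have hG : B * (t - t) ^ 2 + c / 2 * (t - t) + (c / 2 * ρ - B * ρ ^ 2) ≤ u t := by
    refine hu.comparison (p := t - ρ) (q := t + ρ) (ε := 1) (G₂ := fun _ => 2 * B)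
      (G := fun s => B * (s - t) ^ 2 + c / 2 * (s - t) + (c / 2 * ρ - B * ρ ^ 2))
      (by linarith) (by linarith) one_pos (Continuous.continuousOn (by fun_prop))
      (fun y _ => HasSecondDerivAt.quadratic _ _ _ _ _) (fun y hy => ?_) ?_ ?_ t
      ⟨by linarith, by linarith⟩
    · have huy := hu.mem_Icc y ⟨by linarith [hy.1], by linarith [hy.2]⟩
      have hfy : f (u y) ≤ f 0 := hf ⟨le_rfl, huy.1.trans huy.2⟩ huy huy.1
      linarith [le_abs_self (f 0), abs_nonneg (f 0)]
    · have hleft := (hu.mem_Icc (t - ρ) ⟨by linarith, by linarith⟩).1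
      linear_combination hleft
    · linear_combination hle (t + ρ) ⟨by linarith, by linarith⟩
  calc 0 < ρ * (c / 2 - B * ρ) := mul_pos hρ0 (by linarith)
    _ = B * (t - t) ^ 2 + c / 2 * (t - t) + (c / 2 * ρ - B * ρ ^ 2) := by ring
    _ ≤ u t := hG

lemma sub_lt_of_sub_le (hu : IsSupersolution f Q d u) (hφ : IsBVPSol Q f d φ)
    (hf : AntitoneOn f (Icc 0 Q)) (ht : t ∈ Ioc 0 d) (hle : ∀ y ∈ Icc t d, φ (y - t) ≤ u y) :
    ∀ y ∈ Icc t d, φ (y - t) < u y := by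
  have hQ : 0 < Q := hφ.pos (ht.1.trans_le ht.2)
  rintro y ⟨hty, hyd⟩
  rcases ht.2.eq_or_lt with rfl | htd
  · obtain rfl : y = t := le_antisymm hyd hty
    simpa [hφ.apply_zero, hu.apply_top] using hQ
  have hdt : 0 < d - t := sub_pos.2 htd
  obtain ⟨c, hc⟩ : ∃ c, c * (d - t) = Q - φ (d - t) := ⟨_, div_mul_cancel₀ _ hdt.ne'⟩
  have hc0 : 0 < c := by
    refine pos_of_mul_pos_left (b := d - t) ?_ hdt.le
    exact hc.symm ▸ sub_pos.2 (hφ.mem_Ioo ⟨hdt, sub_lt_self d ht.1⟩).2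
  have hchord := hu.sub_add_mul_le hφ hf ⟨ht.1.le, ht.2⟩ hle (c := c) (by linarith)
  rcases hty.eq_or_lt with rfl | hty
  · rw [sub_self, hφ.apply_zero]
    refine hu.pos_of_mul_sub_le hf ⟨ht.1, htd⟩ hc0 fun y hy => le_trans ?_ (hchord y hy)
    exact le_add_of_nonneg_left
      (hφ.mem_Icc hQ.le ⟨sub_nonneg.2 hy.1, (sub_le_self y ht.1.le).trans hy.2⟩).1
  · exact (lt_add_of_pos_right _ (mul_pos hc0 (sub_pos.2 hty))).trans_le (hchord y ⟨hty.le, hyd⟩)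

lemma isCompact_setOf_le_sub (hu : IsSupersolution f Q d u) (hφ : IsBVPSol Q f d φ) :
    IsCompact {p ∈ {p : ℝ × ℝ | 0 ≤ p.1 ∧ p.1 ≤ p.2 ∧ p.2 ≤ d} | u p.2 ≤ φ (p.2 - p.1)} := by
  have htriangle : IsClosed {p : ℝ × ℝ | 0 ≤ p.1 ∧ p.1 ≤ p.2 ∧ p.2 ≤ d} :=
    (isClosed_le continuous_const continuous_fst).inter
      ((isClosed_le continuous_fst continuous_snd).inter
        (isClosed_le continuous_snd continuous_const))
  refine IsCompact.of_isClosed_subset (isCompact_Icc (a := (0 : ℝ)) (b := d) |>.prod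
    (isCompact_Icc (a := (0 : ℝ)) (b := d))) (htriangle.isClosed_le ?_ ?_) ?_
  · exact hu.continuousOn.comp (by fun_prop) fun p ⟨h0, hle, hd⟩ => ⟨h0.trans hle, hd⟩
  · exact hφ.continuousOn.comp (by fun_prop) fun p ⟨h0, hle, hd⟩ =>
      ⟨sub_nonneg.2 hle, by linarith⟩
  · exact fun p ⟨⟨h0, hle, hd⟩, _⟩ => ⟨⟨h0, hle.trans hd⟩, ⟨h0.trans hle, hd⟩⟩

-- Sliding method: for the largest `t` such that the translate `φ (· - t)` meets `u`, this translate
-- still lies below `u`, so that contact is excluded by strictness unless `t = 0`.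
theorem profile_le (hu : IsSupersolution f Q d u) (hφ : IsBVPSol Q f d φ)
    (hf : AntitoneOn f (Icc 0 Q)) : ∀ y ∈ Icc 0 d, φ y ≤ u y := by
  by_contra! hlt
  obtain ⟨y₀, hy₀, hlt⟩ := hlt
  obtain ⟨⟨t, y⟩, ⟨⟨ht0, hty, hyd⟩, htouch⟩, hmax⟩ := (hu.isCompact_setOf_le_sub hφ).exists_isMaxOn
    ⟨(0, y₀), ⟨le_rfl, hy₀⟩, by simpa using hlt.le⟩ continuous_fst.continuousOn
  have hafter {s z : ℝ} (hts : t < s) (hsz : s ≤ z) (hzd : z ≤ d) : φ (z - s) < u z := by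
    by_contra! hle
    exact hts.not_ge (hmax (a := (s, z)) ⟨⟨ht0.trans hts.le, hsz, hzd⟩, hle⟩)
  have hbelow : ∀ z ∈ Icc t d, φ (z - t) ≤ u z := by
    rintro z ⟨htz, hzd⟩
    rcases htz.eq_or_lt with rfl | htz
    · simpa [hφ.apply_zero] using (hu.mem_Icc t ⟨ht0, hzd⟩).1
    have hcont : ContinuousWithinAt (fun s => φ (z - s)) (Icc t z) t :=
      (hφ.continuousOn.comp (by fun_prop) fun s hs =>
        ⟨sub_nonneg.2 hs.2, by linarith [hs.1]⟩) t ⟨le_rfl, htz.le⟩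
    refine le_of_tendsto (hcont.mono_of_mem_nhdsWithin (Icc_mem_nhdsGT htz)) ?_
    filter_upwards [Ioc_mem_nhdsGT htz] with s hs using (hafter hs.1 hs.2 hzd).le
  rcases ht0.eq_or_lt with rfl | ht0
  · exact hlt.not_ge (by simpa using hbelow y₀ hy₀)
  · exact htouch.not_gt
      (hu.sub_lt_of_sub_le hφ hf ⟨ht0, hty.trans hyd⟩ hbelow y ⟨hty, hyd⟩)

end IsSupersolution

lemma exists_le_add_of_sub_le {f : ℝ → ℝ} {S : Set ℝ} {ε : ℝ} (hS : IsCompact S)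
    (hfc : ContinuousOn f S) (hf : AntitoneOn f S) (hε : 0 < ε) :
    ∃ δ > 0, ∀ s ∈ S, ∀ t ∈ S, t - δ ≤ s → f s ≤ f t + ε := by
  obtain ⟨δ, hδ, hfδ⟩ := Metric.uniformContinuousOn_iff.1
    (hS.uniformContinuousOn_of_continuous hfc) ε hε
  refine ⟨δ / 2, half_pos hδ, fun s hs t ht hle => ?_⟩
  rcases le_total t s with hts | hst
  · linarith [hf ht hs hts]
  · have hdist : dist (f s) (f t) < ε := hfδ s hs t ht (by
      rw [Real.dist_eq, abs_sub_comm, abs_of_nonneg (sub_nonneg.2 hst)]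
      linarith)
    linarith [(abs_lt.1 hdist).2]

/-- `ψ` solves `Δψ = f ψ` in the half-strip `(X, ∞) × (0, d)` with values in `[0, Q]` and boundary
values `0` on the bottom and `Q` on the top. This is the model for each end of a nozzle. -/
structure IsHalfStripSol (f : ℝ → ℝ) (Q d X : ℝ) (ψ : ℝ × ℝ → ℝ) : Prop where
  uniformContinuousOn : UniformContinuousOn ψ (Ici X ×ˢ Icc 0 d)
  mem_Icc : ∀ z ∈ Ici X ×ˢ Icc 0 d, ψ z ∈ Icc 0 Q
  hasLaplacianAt : ∀ z ∈ Ioi X ×ˢ Ioo 0 d, HasLaplacianAt ψ (f (ψ z)) z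
  apply_bot : ∀ x ≥ X, ψ (x, 0) = 0
  apply_top : ∀ x ≥ X, ψ (x, d) = Q

/-- The lower far-field limit of `ψ` at height `y`, that is `liminf ψ (x, y)` as `x → ∞`. -/
def lowerLimit (ψ : ℝ × ℝ → ℝ) (y : ℝ) : ℝ := liminf (fun x => ψ (x, y)) atTop

namespace IsHalfStripSol

variable {f : ℝ → ℝ} {Q d X : ℝ} {ψ : ℝ × ℝ → ℝ}

section LowerLimit

variable {y c ε : ℝ}

lemma le_lowerLimit (h : IsHalfStripSol f Q d X ψ) (hy : y ∈ Icc 0 d)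
    (hc : ∀ᶠ x in atTop, c ≤ ψ (x, y)) : c ≤ lowerLimit ψ y := by
  have hle : ∀ᶠ x in atTop, ψ (x, y) ≤ Q :=
    (eventually_ge_atTop X).mono fun x hx => (h.mem_Icc (x, y) ⟨hx, hy⟩).2
  exact le_liminf_of_le (isCoboundedUnder_ge_of_eventually_le atTop hle) hc

lemma eventually_lt_of_lt_lowerLimit (h : IsHalfStripSol f Q d X ψ) (hy : y ∈ Icc 0 d)
    (hc : c < lowerLimit ψ y) : ∀ᶠ x in atTop, c < ψ (x, y) := by
  have hge : ∀ᶠ x in atTop, 0 ≤ ψ (x, y) :=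
    (eventually_ge_atTop X).mono fun x hx => (h.mem_Icc (x, y) ⟨hx, hy⟩).1
  exact eventually_lt_of_lt_liminf hc (isBoundedUnder_of_eventually_ge hge)

lemma lowerLimit_top (h : IsHalfStripSol f Q d X ψ) : lowerLimit ψ d = Q := by
  have hconst : (fun x => ψ (x, d)) =ᶠ[atTop] fun _ => Q :=
    (eventually_ge_atTop X).mono h.apply_top
  rw [lowerLimit, liminf_congr hconst, liminf_const]

lemma lowerLimit_mem_Icc (h : IsHalfStripSol f Q d X ψ) (hy : y ∈ Icc 0 d) :
    lowerLimit ψ y ∈ Icc 0 Q := by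
  have hmem : ∀ᶠ x in atTop, ψ (x, y) ∈ Icc 0 Q :=
    (eventually_ge_atTop X).mono fun x hx => h.mem_Icc (x, y) ⟨hx, hy⟩
  refine ⟨h.le_lowerLimit hy (hmem.mono fun x hx => hx.1), le_of_forall_lt fun c hc => ?_⟩
  obtain ⟨x, hcx, hx⟩ := ((h.eventually_lt_of_lt_lowerLimit hy hc).and hmem).exists
  exact hcx.trans_le hx.2

lemma exists_abs_sub_lt (h : IsHalfStripSol f Q d X ψ) (hε : 0 < ε) :
    ∃ δ > 0, ∀ y ∈ Icc 0 d, ∀ y' ∈ Icc 0 d, |y - y'| < δ →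
      ∀ x ≥ X, |ψ (x, y) - ψ (x, y')| < ε := by
  obtain ⟨δ, hδ, hψ⟩ := Metric.uniformContinuousOn_iff.1 h.uniformContinuousOn ε hε
  refine ⟨δ, hδ, fun y hy y' hy' hyy' x hx => hψ (x, y) ⟨hx, hy⟩ (x, y') ⟨hx, hy'⟩ ?_⟩
  simpa [Prod.dist_eq, Real.dist_eq, hδ] using hyy'

lemma lowerLimit_le_add {y' : ℝ} (h : IsHalfStripSol f Q d X ψ) (hy : y ∈ Icc 0 d)
    (hy' : y' ∈ Icc 0 d) (hle : ∀ x ≥ X, ψ (x, y) ≤ ψ (x, y') + ε) :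
    lowerLimit ψ y ≤ lowerLimit ψ y' + ε := by
  refine le_of_forall_lt_imp_le_of_dense fun c hc => sub_le_iff_le_add.1 (h.le_lowerLimit hy' ?_)
  filter_upwards [h.eventually_lt_of_lt_lowerLimit hy hc, eventually_ge_atTop X] with x hcx hx
  linarith [hle x hx]

lemma continuousOn_lowerLimit (h : IsHalfStripSol f Q d X ψ) :
    ContinuousOn (lowerLimit ψ) (Icc 0 d) := by
  refine Metric.continuousOn_iff.2 fun y hy ε hε => ?_
  obtain ⟨δ, hδ, hψ⟩ := h.exists_abs_sub_lt (half_pos hε)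
  refine ⟨δ, hδ, fun y' hy' hyy' => ?_⟩
  have hclose (x : ℝ) (hx : x ≥ X) := abs_lt.1 (hψ y' hy' y hy hyy' x hx)
  have hle := h.lowerLimit_le_add (ε := ε / 2) hy' hy fun x hx => by linarith [(hclose x hx).2]
  have hge := h.lowerLimit_le_add (ε := ε / 2) hy hy' fun x hx => by linarith [(hclose x hx).1]
  exact abs_lt.2 ⟨by linarith, by linarith⟩

lemma eventually_lowerLimit_sub_le (h : IsHalfStripSol f Q d X ψ) (hε : 0 < ε) :
    ∀ᶠ x in atTop, ∀ y ∈ Icc 0 d, lowerLimit ψ y - ε ≤ ψ (x, y) := by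
  obtain ⟨δ, hδ, hψ⟩ := h.exists_abs_sub_lt (ε := ε / 3) (by positivity)
  refine isCompact_Icc.induction_on (p := fun S => ∀ᶠ x in atTop, ∀ y ∈ S,
    lowerLimit ψ y - ε ≤ ψ (x, y)) (by simp) (fun S T hST hT => ?_) (fun S T hS hT => ?_)
    fun y₀ hy₀ => ⟨_, inter_mem_nhdsWithin _ (ball_mem_nhds y₀ hδ), ?_⟩
  · exact hT.mono fun x hx y hy => hx y (hST hy)
  · filter_upwards [hS, hT] with x hxS hxT y hy using hy.elim (hxS y) (hxT y)
  have hy₀lt : lowerLimit ψ y₀ - ε / 3 < lowerLimit ψ y₀ := by linarith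
  filter_upwards [h.eventually_lt_of_lt_lowerLimit hy₀ hy₀lt, eventually_ge_atTop X]
    with x hx₀ hxX y ⟨hy, hyy₀⟩
  have hclose (x : ℝ) (hx : x ≥ X) := abs_lt.1 (hψ y hy y₀ hy₀ hyy₀ x hx)
  have hle := h.lowerLimit_le_add (ε := ε / 3) hy hy₀ fun x hx => by linarith [(hclose x hx).2]
  linarith [(hclose x hxX).1]

end LowerLimit

lemma le_of_subsolution_on_box {x₀ R p q k : ℝ} {G G₂ : ℝ → ℝ} (h : IsHalfStripSol f Q d X ψ)
    (hR : 0 ≤ R) (hX : X ≤ x₀ - R) (hp : 0 ≤ p) (hq : q ≤ d) (hk : 0 ≤ k)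
    (hG : ContinuousOn G (Icc p q)) (hG₂ : ∀ y ∈ Ioo p q, HasSecondDerivAt G (G₂ y) y)
    (hfG : ∀ x ≥ x₀ - R, ∀ y ∈ Ioo p q, f (ψ (x, y)) + 2 * k < G₂ y)
    (hside : ∀ x ≥ x₀ - R, ∀ y ∈ Icc p q, G y - k * R ^ 2 ≤ ψ (x, y))
    (hbase : ∀ x ≥ x₀ - R, G p ≤ ψ (x, p) ∧ G q ≤ ψ (x, q)) :
    ∀ y ∈ Icc p q, G y ≤ ψ (x₀, y) := by
  refine fun y hy => sub_nonneg.1 (le_of_laplacian_lt_on_box (W := fun z => ψ z - G z.2) hR hk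
    (ContinuousOn.sub ?_ ?_) (fun z hz => ?_) (fun y hy => ?_) (fun x hx => ?_) y hy)
  · exact h.uniformContinuousOn.continuousOn.mono
      (prod_mono (fun x hx => hX.trans hx.1) (Icc_subset_Icc hp hq))
  · exact hG.comp (by fun_prop) fun z hz => hz.2
  · obtain ⟨hzx, hzy⟩ := hz
    refine ⟨_, ?_, (h.hasLaplacianAt z ⟨hX.trans_lt hzx.1, Ioo_subset_Ioo hp hq hzy⟩).sub
      (HasLaplacianAt.of_snd (hG₂ z.2 hzy))⟩
    linarith [hfG z.1 hzx.1.le z.2 hzy]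
  · constructor <;> linarith [hside (x₀ - R) le_rfl y hy, hside (x₀ + R) (by linarith) y hy]
  · exact (hbase x hx.1).imp sub_nonneg.2 sub_nonneg.2

-- The box is taken so long that its vertical sides do not matter, and so far to the right that
-- `f ψ` exceeds `f (lowerLimit ψ)` by no more than the strictness of the subsolution allows.
lemma eventually_sub_le_of_subsolution {p q ε γ : ℝ} {G G₂ : ℝ → ℝ}
    (h : IsHalfStripSol f Q d X ψ) (hfc : ContinuousOn f (Icc 0 Q)) (hf : AntitoneOn f (Icc 0 Q))
    (hp : 0 ≤ p) (hq : q ≤ d) (hε : 0 < ε) (hG : ContinuousOn G (Icc p q))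
    (hG₂ : ∀ y ∈ Ioo p q, HasSecondDerivAt G (G₂ y) y)
    (hfG : ∀ y ∈ Ioo p q, f (lowerLimit ψ y) + ε ≤ G₂ y)
    (hGp : G p ≤ lowerLimit ψ p) (hGq : G q ≤ lowerLimit ψ q) (hγ : 0 < γ) :
    ∀ᶠ x in atTop, ∀ y ∈ Icc p q, G y - γ ≤ ψ (x, y) := by
  obtain ⟨δ, hδ, hfδ⟩ := exists_le_add_of_sub_le isCompact_Icc hfc hf (half_pos hε)
  have hpqd : Icc p q ⊆ Icc 0 d := Icc_subset_Icc hp hq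
  obtain ⟨B, hB⟩ := isCompact_Icc.bddAbove_image (hG.sub (h.continuousOn_lowerLimit.mono hpqd))
  obtain ⟨R, hR, hR0⟩ : ∃ R, B ≤ ε / 8 * R ^ 2 ∧ 0 ≤ R :=
    (((tendsto_pow_atTop two_ne_zero).const_mul_atTop (by positivity)).eventually_ge_atTop B
      |>.and (eventually_ge_atTop 0)).exists
  obtain ⟨X', hX'⟩ := eventually_atTop.1
    ((eventually_ge_atTop X).and (h.eventually_lowerLimit_sub_le (lt_min hγ hδ)))
  filter_upwards [eventually_ge_atTop (X' + R)] with x₀ hx₀ y hy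
  have hpq : p ≤ q := hy.1.trans hy.2
  have hleft : X' ≤ x₀ - R := le_sub_iff_add_le.2 hx₀
  have hX {x : ℝ} (hx : x ≥ x₀ - R) : X ≤ x := (hX' x (hleft.trans hx)).1
  have hlow {x y : ℝ} (hx : x ≥ x₀ - R) (hy : y ∈ Icc p q) :
      lowerLimit ψ y - min γ δ ≤ ψ (x, y) := (hX' x (hleft.trans hx)).2 y (hpqd hy)
  have hγδ := min_le_left γ δ
  refine h.le_of_subsolution_on_box (G := fun s => G s - γ) (G₂ := G₂) (k := ε / 8) hR0 (hX le_rfl)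
    hp hq (by positivity) (hG.sub continuousOn_const) (fun s hs => ?_) (fun x hx s hs => ?_)
    (fun x hx s hs => ?_) (fun x hx => ?_) y hy
  · simpa using (hG₂ s hs).sub (HasSecondDerivAt.const γ s)
  · have hs' := Ioo_subset_Icc_self hs
    have hfψ : f (ψ (x, s)) ≤ f (lowerLimit ψ s) + ε / 2 :=
      hfδ _ (h.mem_Icc (x, s) ⟨hX hx, hpqd hs'⟩) _ (h.lowerLimit_mem_Icc (hpqd hs'))
        (by linarith [hlow hx hs', min_le_right γ δ])
    linarith [hfG s hs]
  · have hGB : G s - lowerLimit ψ s ≤ B := hB (mem_image_of_mem _ hs)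
    linarith [hlow hx hs]
  · constructor <;> linarith [hlow hx (left_mem_Icc.2 hpq), hlow hx (right_mem_Icc.2 hpq)]

theorem isSupersolution_lowerLimit (h : IsHalfStripSol f Q d X ψ)
    (hfc : ContinuousOn f (Icc 0 Q)) (hf : AntitoneOn f (Icc 0 Q)) :
    IsSupersolution f Q d (lowerLimit ψ) where
  continuousOn := h.continuousOn_lowerLimit
  mem_Icc _ := h.lowerLimit_mem_Icc
  apply_top := h.lowerLimit_top
  comparison := by
    intro p q ε G G₂ hp hq hε hG hG₂ hfG hGp hGq y hy
    refine le_of_forall_pos_sub_le fun γ hγ => h.le_lowerLimit (Icc_subset_Icc hp hq hy) ?_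
    filter_upwards [h.eventually_sub_le_of_subsolution hfc hf hp hq hε hG hG₂ hfG hGp hGq hγ]
      with x hx using hx y hy

section Convergence

variable {φ : ℝ → ℝ}

lemma eventually_profile_sub_le {ε : ℝ} (h : IsHalfStripSol f Q d X ψ)
    (hfc : ContinuousOn f (Icc 0 Q)) (hf : AntitoneOn f (Icc 0 Q)) (hφ : IsBVPSol Q f d φ)
    (hε : 0 < ε) : ∀ᶠ x in atTop, ∀ y ∈ Icc 0 d, φ y - ε ≤ ψ (x, y) := by
  filter_upwards [h.eventually_lowerLimit_sub_le hε] with x hx y hy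
  have hle := (h.isSupersolution_lowerLimit hfc hf).profile_le hφ hf y hy
  linarith [hx y hy]

lemma reflect (h : IsHalfStripSol f Q d X ψ) :
    IsHalfStripSol (fun s => -f (Q - s)) Q d X (fun z => Q - ψ (z.1, d - z.2)) := by
  have hIcc {y : ℝ} (hy : y ∈ Icc 0 d) : d - y ∈ Icc 0 d :=
    ⟨sub_nonneg.2 hy.2, sub_le_self d hy.1⟩
  refine ⟨?_, fun z hz => ?_, fun z hz => ?_, fun x hx => ?_, fun x hx => ?_⟩
  · have hflip : UniformContinuous fun z : ℝ × ℝ => (z.1, d - z.2) :=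
      uniformContinuous_fst.prodMk (uniformContinuous_const.sub uniformContinuous_snd)
    exact (uniformContinuous_const.sub uniformContinuous_id).comp_uniformContinuousOn
      (h.uniformContinuousOn.comp hflip.uniformContinuousOn fun z hz => ⟨hz.1, hIcc hz.2⟩)
  · obtain ⟨hpos, hle⟩ := h.mem_Icc (z.1, d - z.2) ⟨hz.1, hIcc hz.2⟩
    exact ⟨sub_nonneg.2 hle, sub_le_self Q hpos⟩
  · have hlap := h.hasLaplacianAt (z.1, d - z.2) ⟨hz.1, sub_pos.2 hz.2.2, sub_lt_self d hz.2.1⟩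
    simpa using (HasLaplacianAt.of_fst (HasSecondDerivAt.const Q z.1)).sub
      (hlap.comp_const_sub_snd d)
  · simp [h.apply_top x hx]
  · simp [h.apply_bot x hx]

theorem tendstoUniformlyOn (h : IsHalfStripSol f Q d X ψ) (hfc : ContinuousOn f (Icc 0 Q))
    (hf : AntitoneOn f (Icc 0 Q)) (hφ : IsBVPSol Q f d φ) :
    TendstoUniformlyOn (fun x y => ψ (x, y)) φ atTop (Icc 0 d) := by
  refine Metric.tendstoUniformlyOn_iff.2 fun ε hε => ?_
  have hIcc {s : ℝ} (hs : s ∈ Icc 0 Q) : Q - s ∈ Icc 0 Q :=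
    ⟨sub_nonneg.2 hs.2, sub_le_self Q hs.1⟩
  have hfc' : ContinuousOn (fun s => -f (Q - s)) (Icc 0 Q) :=
    (hfc.comp (by fun_prop) fun s hs => hIcc hs).neg
  have hf' : AntitoneOn (fun s => -f (Q - s)) (Icc 0 Q) := fun s hs t ht hst =>
    neg_le_neg (hf (hIcc ht) (hIcc hs) (sub_le_sub_left hst Q))
  filter_upwards [h.eventually_profile_sub_le hfc hf hφ (half_pos hε),
    h.reflect.eventually_profile_sub_le hfc' hf' hφ.reflect (half_pos hε)] with x hlow hup y hy
  have hupy := hup (d - y) ⟨sub_nonneg.2 hy.2, sub_le_self d hy.1⟩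
  simp only [sub_sub_cancel] at hupy
  exact abs_sub_lt_iff.2 ⟨by linarith [hlow y hy], by linarith⟩

lemma abs_deriv_sub_deriv_le {z : ℝ × ℝ} {r C M N : ℝ} (h : IsHalfStripSol f Q d X ψ)
    (hφ : IsBVPSol Q f d φ) (hr : 0 < r) (hz : closedBall z r ⊆ Ioi X ×ˢ Ioo 0 d)
    (hC : ∀ s ∈ Icc 0 Q, |f s| ≤ C) (hN : 2 * C < N)
    (hM : ∀ w ∈ closedBall z r, |ψ w - φ w.2| ≤ M) :
    |deriv (fun s => ψ (z.1, s)) z.2 - deriv φ z.2| ≤ 2 * M / r + r * N / 2 := by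
  have hz₀ : z ∈ closedBall z r := mem_closedBall_self hr.le
  have hψ {w : ℝ × ℝ} (hw : w ∈ closedBall z r) : ψ w ∈ Icc 0 Q :=
    h.mem_Icc w ⟨Ioi_subset_Ici_self (hz hw).1, Ioo_subset_Icc_self (hz hw).2⟩
  refine abs_deriv_le_of_laplacian_bound (W := fun w => ψ w - φ w.2) hr (ContinuousOn.sub ?_ ?_) hM
    (fun w hw => ?_) ?_
  · exact h.uniformContinuousOn.continuousOn.mono fun w hw =>
      ⟨Ioi_subset_Ici_self (hz hw).1, Ioo_subset_Icc_self (hz hw).2⟩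
  · exact hφ.continuousOn.comp (by fun_prop) fun w hw => Ioo_subset_Icc_self (hz hw).2
  · replace hw := ball_subset_closedBall hw
    refine ⟨f (ψ w) - f (φ w.2), ?_, (h.hasLaplacianAt w (hz hw)).sub
      (HasLaplacianAt.of_snd (hφ.hasSecondDerivAt (hz hw).2))⟩
    have hψC := hC _ (hψ hw)
    have hφC := hC _ (Ioo_subset_Icc_self (hφ.mem_Ioo (hz hw).2))
    linarith [abs_sub (f (ψ w)) (f (φ w.2))]
  · exact (h.hasLaplacianAt z (hz hz₀)).differentiableAt_snd.hasDerivAt.sub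
      (hφ.hasSecondDerivAt (hz hz₀).2).differentiableAt.hasDerivAt

theorem tendstoUniformlyOn_deriv {S : Set ℝ} (h : IsHalfStripSol f Q d X ψ)
    (hfc : ContinuousOn f (Icc 0 Q)) (hf : AntitoneOn f (Icc 0 Q)) (hφ : IsBVPSol Q f d φ)
    (hS : IsCompact S) (hSd : S ⊆ Ioo 0 d) :
    TendstoUniformlyOn (fun x y => deriv (fun s => ψ (x, s)) y) (deriv φ) atTop S := by
  refine Metric.tendstoUniformlyOn_iff.2 fun ε hε => ?_
  obtain ⟨C, hC⟩ := isCompact_Icc.exists_bound_of_continuousOn hfc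
  obtain ⟨δ, hδ, hδd⟩ := hS.exists_cthickening_subset_open isOpen_Ioo hSd
  set N := 2 * |C| + 1
  have hN0 : 0 < N := by positivity
  set r := min δ (ε / N)
  have hr0 : 0 < r := lt_min hδ (div_pos hε hN0)
  have hrN : r * N ≤ ε := (le_div_iff₀ hN0).1 (min_le_right _ _)
  obtain ⟨X', hX'⟩ := eventually_atTop.1 ((eventually_gt_atTop X).and
    (Metric.tendstoUniformlyOn_iff.1 (h.tendstoUniformlyOn hfc hf hφ) (r * ε / 8) (by positivity)))
  filter_upwards [eventually_ge_atTop (X' + r)] with x hx y hy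
  have hball : closedBall (x, y) r ⊆ Ici X' ×ˢ Ioo 0 d := by
    rw [← closedBall_prod_same]
    refine prod_mono (fun s hs => ?_) fun s hs =>
      hδd (closedBall_subset_cthickening hy δ (closedBall_subset_closedBall (min_le_left _ _) hs))
    rw [Real.closedBall_eq_Icc] at hs
    exact (le_sub_iff_add_le.2 hx).trans hs.1
  have hclose : ∀ w ∈ closedBall (x, y) r, |ψ w - φ w.2| ≤ r * ε / 8 := fun w hw => by
    rw [abs_sub_comm]
    exact ((hX' _ (hball hw).1).2 w.2 (Ioo_subset_Icc_self (hball hw).2)).le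
  rw [dist_comm, Real.dist_eq]
  calc |deriv (fun s => ψ (x, s)) y - deriv φ y|
      ≤ 2 * (r * ε / 8) / r + r * N / 2 :=
        h.abs_deriv_sub_deriv_le hφ hr0 (hball.trans (prod_mono_left fun s hs => (hX' s hs).1)) hC
          (by linarith [le_abs_self C]) hclose
    _ = ε / 4 + r * N / 2 := by field_simp; ring
    _ < ε := by linarith

end Convergence

end IsHalfStripSol

/-- `ψ` solves `Δψ = f ψ` in the nozzle `h₀ x₁ < x₂ < h₁ x₁` with values in `[0, Q]` and boundary
values `0` on the lower and `Q` on the upper wall. -/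
structure IsNozzleSol (f : ℝ → ℝ) (Q : ℝ) (h₀ h₁ : ℝ → ℝ) (ψ : ℝ × ℝ → ℝ) : Prop where
  uniformContinuousOn : UniformContinuousOn ψ {z | z.2 ∈ Icc (h₀ z.1) (h₁ z.1)}
  mem_Icc : ∀ z : ℝ × ℝ, z.2 ∈ Icc (h₀ z.1) (h₁ z.1) → ψ z ∈ Icc 0 Q
  hasLaplacianAt : ∀ z : ℝ × ℝ, z.2 ∈ Ioo (h₀ z.1) (h₁ z.1) → HasLaplacianAt ψ (f (ψ z)) z
  apply_bot : ∀ x, ψ (x, h₀ x) = 0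
  apply_top : ∀ x, ψ (x, h₁ x) = Q

namespace IsNozzleSol

variable {f h₀ h₁ φ : ℝ → ℝ} {Q X a b ε : ℝ} {ψ : ℝ × ℝ → ℝ} {K : Set ℝ}

lemma of_contDiffOn {Ω : Set (ℝ × ℝ)} (hΩ : Ω = {x : ℝ × ℝ | h₀ x.1 < x.2 ∧ x.2 < h₁ x.1})
    (hopen : IsOpen Ω) (hlt : ∀ x, h₀ x < h₁ x) (hC2 : ContDiffOn ℝ 2 ψ Ω)
    (hψ : UniformContinuousOn ψ (closure Ω)) (hbd : ∀ x ∈ Ω, 0 ≤ ψ x ∧ ψ x ≤ Q)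
    (heq : ∀ x ∈ Ω, lap ψ x = f (ψ x)) (hΓ₀ : ∀ x, ψ (x, h₀ x) = 0)
    (hΓ₁ : ∀ x, ψ (x, h₁ x) = Q) : IsNozzleSol f Q h₀ h₁ ψ := by
  subst hΩ
  have hclosure : {z : ℝ × ℝ | z.2 ∈ Icc (h₀ z.1) (h₁ z.1)} ⊆
      closure {z : ℝ × ℝ | h₀ z.1 < z.2 ∧ z.2 < h₁ z.1} := by
    rintro ⟨x, y⟩ hy
    have hslice : Continuous fun s : ℝ => (x, s) := by fun_prop
    change y ∈ Icc (h₀ x) (h₁ x) at hy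
    rw [← closure_Ioo (hlt x).ne] at hy
    exact map_mem_closure hslice hy fun s hs => hs
  refine ⟨hψ.mono hclosure, fun z hz => ?_, fun z hz => ?_, hΓ₀, hΓ₁⟩
  · exact isClosed_Icc.closure_subset
      (((hψ.continuousOn z (hclosure hz)).mono subset_closure).mem_closure (hclosure hz) hbd)
  · rw [← heq z hz]
    exact hasLaplacianAt_lap (hC2.contDiffAt (hopen.mem_nhds hz))

lemma isHalfStripSol (h : IsNozzleSol f Q h₀ h₁ ψ) (hend : ∀ x ≥ X, h₀ x = a ∧ h₁ x = b) :
    IsHalfStripSol f Q (b - a) X (fun z => ψ (z.1, a + z.2)) := by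
  have hmem {z : ℝ × ℝ} (hz : z ∈ Ici X ×ˢ Icc 0 (b - a)) :
      a + z.2 ∈ Icc (h₀ z.1) (h₁ z.1) := by
    obtain ⟨hz₀, hz₁⟩ := hend z.1 hz.1
    rw [hz₀, hz₁]
    exact ⟨le_add_of_nonneg_right hz.2.1, by linarith [hz.2.2]⟩
  refine ⟨?_, fun z hz => h.mem_Icc _ (hmem hz), fun z hz => ?_, fun x hx => ?_, fun x hx => ?_⟩
  · have hshift : UniformContinuous fun z : ℝ × ℝ => (z.1, a + z.2) :=
      uniformContinuous_fst.prodMk (uniformContinuous_const.add uniformContinuous_snd)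
    exact h.uniformContinuousOn.comp hshift.uniformContinuousOn fun z hz => hmem hz
  · obtain ⟨hz₀, hz₁⟩ := hend z.1 hz.1.le
    refine (h.hasLaplacianAt (z.1, a + z.2) ?_).comp_const_add_snd a
    rw [hz₀, hz₁]
    exact ⟨lt_add_of_pos_right a hz.2.1, by linarith [hz.2.2]⟩
  · simpa [(hend x hx).1] using h.apply_bot x
  · simpa [(hend x hx).2] using h.apply_top x

lemma reflect (h : IsNozzleSol f Q h₀ h₁ ψ) :
    IsNozzleSol f Q (fun x => h₀ (-x)) (fun x => h₁ (-x)) (fun z => ψ (-z.1, z.2)) where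
  uniformContinuousOn := by
    have hflip : UniformContinuous fun z : ℝ × ℝ => (-z.1, z.2) :=
      uniformContinuous_fst.neg.prodMk uniformContinuous_snd
    exact h.uniformContinuousOn.comp hflip.uniformContinuousOn fun z hz => hz
  mem_Icc z := h.mem_Icc (-z.1, z.2)
  hasLaplacianAt z hz := (h.hasLaplacianAt (-z.1, z.2) hz).comp_neg_fst
  apply_bot x := h.apply_bot (-x)
  apply_top x := h.apply_top (-x)

theorem eventually_atTop_abs_sub_add_abs_deriv_sub_lt (h : IsNozzleSol f Q h₀ h₁ ψ)
    (hend : ∀ x ≥ X, h₀ x = a ∧ h₁ x = b) (hfc : ContinuousOn f (Icc 0 Q))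
    (hf : AntitoneOn f (Icc 0 Q)) (hφ : IsBVPSol Q f (b - a) φ) (hK : IsCompact K)
    (hKab : K ⊆ Ioo a b) (hε : 0 < ε) :
    ∀ᶠ x in atTop, ∀ y ∈ K,
      |ψ (x, y) - φ (y - a)| + |deriv (fun s => ψ (x, s)) y - deriv φ (y - a)| < ε := by
  have hK' : (fun y => y - a) '' K ⊆ Ioo 0 (b - a) := by
    rintro - ⟨y, hy, rfl⟩
    exact ⟨sub_pos.2 (hKab hy).1, sub_lt_sub_right (hKab hy).2 a⟩
  have hstrip := h.isHalfStripSol hend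
  filter_upwards [Metric.tendstoUniformlyOn_iff.1 (hstrip.tendstoUniformlyOn hfc hf hφ) _
      (half_pos hε), Metric.tendstoUniformlyOn_iff.1 (hstrip.tendstoUniformlyOn_deriv hfc hf hφ
      (hK.image (by fun_prop)) hK') _ (half_pos hε)] with x hx hx' y hy
  have hyK := mem_image_of_mem (fun y => y - a) hy
  have hψ := hx _ (Ioo_subset_Icc_self (hK' hyK))
  have hderiv := hx' _ hyK
  rw [dist_comm, Real.dist_eq] at hψ hderiv
  simp only [deriv_comp_const_add (fun s => ψ (x, s)), add_sub_cancel] at hψ hderiv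
  linarith

theorem eventually_atBot_abs_sub_add_abs_deriv_sub_lt (h : IsNozzleSol f Q h₀ h₁ ψ)
    (hend : ∀ x ≤ X, h₀ x = a ∧ h₁ x = b) (hfc : ContinuousOn f (Icc 0 Q))
    (hf : AntitoneOn f (Icc 0 Q)) (hφ : IsBVPSol Q f (b - a) φ) (hK : IsCompact K)
    (hKab : K ⊆ Ioo a b) (hε : 0 < ε) :
    ∀ᶠ x in atBot, ∀ y ∈ K,
      |ψ (x, y) - φ (y - a)| + |deriv (fun s => ψ (x, s)) y - deriv φ (y - a)| < ε := by
  have hend' : ∀ x ≥ -X, h₀ (-x) = a ∧ h₁ (-x) = b := fun x hx => hend (-x) (neg_le.1 hx)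
  simpa only [neg_neg] using tendsto_neg_atBot_atTop.eventually
    (h.reflect.eventually_atTop_abs_sub_add_abs_deriv_sub_lt hend' hfc hf hφ hK hKab hε)

end IsNozzleSol

lemma continuousOn_image_of_leftInvOn {X Y : Type*} [TopologicalSpace X] [TopologicalSpace Y]
    [T2Space Y] {g : X → Y} {κ : Y → X} {S : Set X} (hS : IsCompact S) (hg : ContinuousOn g S)
    (hκ : LeftInvOn κ g S) : ContinuousOn κ (g '' S) := by
  refine continuousOn_iff_isClosed.2 fun T hT => ⟨g '' (T ∩ S), ?_, ?_⟩
  · exact ((hS.inter_left hT).image_of_continuousOn (hg.mono inter_subset_right)).isClosed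
  · rw [hκ.image_inter', inter_assoc, inter_self]

/-- The upstream profile `φ̄₁` of the paper: the stream function of the parabolic flow of flux `Q`
in the strip of width `1`. -/
def cubicProfile (Q t : ℝ) : ℝ := Q * (3 * t ^ 2 - 2 * t ^ 3)

section CubicProfile

variable {Q : ℝ} {κ : ℝ → ℝ}

lemma contDiff_cubicProfile {n : WithTop ℕ∞} : ContDiff ℝ n (cubicProfile Q) := by
  unfold cubicProfile
  fun_prop

lemma deriv_cubicProfile : deriv (cubicProfile Q) = fun t => 6 * Q * (t - t ^ 2) := by
  funext t
  refine ((((hasDerivAt_pow 2 t).const_mul 3).sub ((hasDerivAt_pow 3 t).const_mul 2)).const_mul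
    Q).congr_deriv ?_ |>.deriv
  norm_num
  ring

lemma deriv_deriv_cubicProfile (t : ℝ) :
    deriv (deriv (cubicProfile Q)) t = 6 * Q * (1 - 2 * t) := by
  rw [deriv_cubicProfile]
  simp

lemma strictMonoOn_cubicProfile (hQ : 0 < Q) : StrictMonoOn (cubicProfile Q) (Icc 0 1) := by
  refine strictMonoOn_of_deriv_pos (convex_Icc 0 1)
    (contDiff_cubicProfile (n := 0)).continuous.continuousOn fun t ht => ?_
  rw [interior_Icc] at ht
  rw [deriv_cubicProfile]
  have hpos : 0 < t - t ^ 2 := by nlinarith [ht.1, ht.2]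
  positivity

lemma cubicProfile_zero : cubicProfile Q 0 = 0 := by
  simp [cubicProfile]

lemma cubicProfile_one : cubicProfile Q 1 = Q := by
  norm_num [cubicProfile]

lemma image_cubicProfile_Icc (hQ : 0 < Q) : cubicProfile Q '' Icc 0 1 = Icc 0 Q := by
  simpa only [cubicProfile_zero, cubicProfile_one] using
    (contDiff_cubicProfile (n := 0)).continuous.continuousOn.image_Icc_of_monotoneOn zero_le_one
      (strictMonoOn_cubicProfile hQ).monotoneOn

lemma continuousOn_nonlinearity_cubicProfile (hQ : 0 < Q)
    (hκ : LeftInvOn κ (cubicProfile Q) (Icc 0 1)) :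
    ContinuousOn (fun s => 6 * Q * (1 - 2 * κ s)) (Icc 0 Q) := by
  have hκc : ContinuousOn κ (Icc 0 Q) := by
    rw [← image_cubicProfile_Icc hQ]
    exact continuousOn_image_of_leftInvOn isCompact_Icc
      (contDiff_cubicProfile (n := 0)).continuous.continuousOn hκ
  fun_prop

lemma antitoneOn_nonlinearity_cubicProfile (hQ : 0 < Q)
    (hκ : LeftInvOn κ (cubicProfile Q) (Icc 0 1)) :
    AntitoneOn (fun s => 6 * Q * (1 - 2 * κ s)) (Icc 0 Q) := by
  rw [← image_cubicProfile_Icc hQ]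
  rintro - ⟨t, ht, rfl⟩ - ⟨t', ht', rfl⟩ hle
  have htt' : t ≤ t' := ((strictMonoOn_cubicProfile hQ).le_iff_le ht ht').1 hle
  simp only [hκ ht, hκ ht']
  gcongr

lemma isBVPSol_cubicProfile (hQ : 0 < Q) (hκ : LeftInvOn κ (cubicProfile Q) (Icc 0 1)) :
    IsBVPSol Q (fun s => 6 * Q * (1 - 2 * κ s)) 1 (cubicProfile Q) := by
  have hmono := strictMonoOn_cubicProfile hQ
  refine ⟨contDiff_cubicProfile.contDiffOn, contDiff_cubicProfile.contDiffOn, fun t ht => ?_,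
    cubicProfile_zero, cubicProfile_one, fun t ht => ?_⟩
  · simp only [deriv_deriv_cubicProfile, hκ (Ioo_subset_Icc_self ht)]
  · have ht' := Ioo_subset_Icc_self ht
    have hzero := hmono (left_mem_Icc.2 zero_le_one) ht' ht.1
    have hone := hmono ht' (right_mem_Icc.2 zero_le_one) ht.2
    rw [cubicProfile_zero] at hzero
    rw [cubicProfile_one] at hone
    exact ⟨hzero, hone⟩

end CubicProfile

theorem stmt17_general {Q : ℝ} {f : ℝ → ℝ} (hfc : ContinuousOn f (Icc 0 Q))
    (hf : AntitoneOn f (Icc 0 Q)) {h₀ h₁ : ℝ → ℝ} (hh₀ : Continuous h₀) (hh₁ : Continuous h₁)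
    (hlt : ∀ x₁, h₀ x₁ < h₁ x₁) {Lm Lp a₀ b₀ a₁ b₁ : ℝ}
    (hup : ∀ x₁ ≤ Lm, h₀ x₁ = a₀ ∧ h₁ x₁ = b₀) (hdown : ∀ x₁ ≥ Lp, h₀ x₁ = a₁ ∧ h₁ x₁ = b₁)
    {Ω : Set (ℝ × ℝ)} (hΩ : Ω = {x : ℝ × ℝ | h₀ x.1 < x.2 ∧ x.2 < h₁ x.1}) {ψ : ℝ × ℝ → ℝ}
    (hC2 : ContDiffOn ℝ 2 ψ Ω) (hψ : UniformContinuousOn ψ (closure Ω))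
    (hbd : ∀ x ∈ Ω, 0 ≤ ψ x ∧ ψ x ≤ Q) (heq : ∀ x ∈ Ω, lap ψ x = f (ψ x))
    (hΓ₀ : ∀ x₁, ψ (x₁, h₀ x₁) = 0) (hΓ₁ : ∀ x₁, ψ (x₁, h₁ x₁) = Q) {φ₀ φ₁ : ℝ → ℝ}
    (hφ₀ : IsBVPSol Q f (b₀ - a₀) φ₀) (hφ₁ : IsBVPSol Q f (b₁ - a₁) φ₁) :
    (∀ K : Set ℝ, K ⊆ Ioo a₀ b₀ → IsCompact K → ∀ ε > 0, ∃ M : ℝ, ∀ x₁ ≤ M, ∀ x₂ ∈ K,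
      |ψ (x₁, x₂) - φ₀ (x₂ - a₀)| + |pd2 ψ (x₁, x₂) - deriv φ₀ (x₂ - a₀)| < ε) ∧
    (∀ K : Set ℝ, K ⊆ Ioo a₁ b₁ → IsCompact K → ∀ ε > 0, ∃ M : ℝ, ∀ x₁ ≥ M, ∀ x₂ ∈ K,
      |ψ (x₁, x₂) - φ₁ (x₂ - a₁)| + |pd2 ψ (x₁, x₂) - deriv φ₁ (x₂ - a₁)| < ε) := by
  have hopen : IsOpen Ω := by
    rw [hΩ]
    exact (isOpen_lt (hh₀.comp continuous_fst) continuous_snd).inter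
      (isOpen_lt continuous_snd (hh₁.comp continuous_fst))
  have hsol := IsNozzleSol.of_contDiffOn hΩ hopen hlt hC2 hψ hbd heq hΓ₀ hΓ₁
  have hpd2 {x y : ℝ} (hxy : h₀ x < y ∧ y < h₁ x) : pd2 ψ (x, y) = deriv (fun s => ψ (x, s)) y :=
    (hasDerivAt_pd2 ((hC2.contDiffAt (hopen.mem_nhds (by rwa [hΩ]))).differentiableAt
      two_ne_zero)).deriv.symm
  refine ⟨fun K hK hKc ε hε => ?_, fun K hK hKc ε hε => ?_⟩
  · obtain ⟨M, hM⟩ := eventually_atBot.1 ((eventually_le_atBot Lm).and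
      (hsol.eventually_atBot_abs_sub_add_abs_deriv_sub_lt hup hfc hf hφ₀ hKc hK hε))
    refine ⟨M, fun x hx y hy => ?_⟩
    obtain ⟨hxa, hxb⟩ := hup x (hM x hx).1
    rw [hpd2 (hxa ▸ hxb ▸ hK hy)]
    exact (hM x hx).2 y hy
  · obtain ⟨M, hM⟩ := eventually_atTop.1 ((eventually_ge_atTop Lp).and
      (hsol.eventually_atTop_abs_sub_add_abs_deriv_sub_lt hdown hfc hf hφ₁ hKc hK hε))
    refine ⟨M, fun x hx y hy => ?_⟩
    obtain ⟨hxa, hxb⟩ := hdown x (hM x hx).1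
    rw [hpd2 (hxa ▸ hxb ▸ hK hy)]
    exact (hM x hx).2 y hy

/-- Far-field behavior of monotone solutions of `Δψ = f(ψ)` in the nozzle: `ψ`
converges in `C¹_loc` to `φ̄₁` as `x₁ → −∞` and to `φ̄_{b−a}(· − a)` as `x₁ → +∞`. -/
theorem stmt17
    (Q α : ℝ) (hQ : 0 < Q) (hα : α ∈ Set.Ioo (0 : ℝ) 1)
    (κ : ℝ → ℝ) (hκ : ∀ t ∈ Set.Icc (0 : ℝ) 1, κ (Q * (3 * t ^ 2 - 2 * t ^ 3)) = t)
    (f : ℝ → ℝ) (hf : ∀ s : ℝ, f s = 6 * Q * (1 - 2 * κ s))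
    (h₀ h₁ : ℝ → ℝ)
    (hh₀ : ContDiff ℝ 2 h₀) (hh₁ : ContDiff ℝ 2 h₁)
    (hh₀α : ∃ C : ℝ, ∀ x y : ℝ, |deriv (deriv h₀) x - deriv (deriv h₀) y| ≤ C * |x - y| ^ α)
    (hh₁α : ∃ C : ℝ, ∀ x y : ℝ, |deriv (deriv h₁) x - deriv (deriv h₁) y| ≤ C * |x - y| ^ α)
    (hlt : ∀ x₁ : ℝ, h₀ x₁ < h₁ x₁)
    (Lm Lp a b : ℝ) (hLm : Lm < 0) (hLp : 0 < Lp)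
    (ha : 0 ≤ a) (hab : a < b) (hb : b ≤ 1)
    (hup : ∀ x₁ ≤ Lm, h₀ x₁ = 0 ∧ h₁ x₁ = 1)
    (hdown : ∀ x₁ ≥ Lp, h₀ x₁ = a ∧ h₁ x₁ = b)
    (Ω : Set (ℝ × ℝ)) (hΩ : Ω = {x : ℝ × ℝ | h₀ x.1 < x.2 ∧ x.2 < h₁ x.1})
    (ψ : ℝ × ℝ → ℝ)
    (hC2 : ContDiffOn ℝ 2 ψ Ω)
    (hLip : ∃ K, LipschitzOnWith K ψ (closure Ω))
    (hbd : ∀ x ∈ Ω, 0 ≤ ψ x ∧ ψ x ≤ Q)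
    (heq : ∀ x ∈ Ω, lap ψ x = f (ψ x))
    (hΓ₀ : ∀ x₁ : ℝ, ψ (x₁, h₀ x₁) = 0)
    (hΓ₁ : ∀ x₁ : ℝ, ψ (x₁, h₁ x₁) = Q)
    (hmono : ∀ x ∈ Ω, 0 ≤ pd2 ψ x)
    (φ1 : ℝ → ℝ) (hφ1 : ∀ t : ℝ, φ1 t = Q * (3 * t ^ 2 - 2 * t ^ 3))
    (φba : ℝ → ℝ) (hφba : IsBVPSol Q f (b - a) φba) :
    (∀ K : Set ℝ, K ⊆ Set.Ioo (0 : ℝ) 1 → IsCompact K →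
      ∀ ε > 0, ∃ M : ℝ, ∀ x₁ ≤ M, ∀ x₂ ∈ K,
        |ψ (x₁, x₂) - φ1 x₂| + |pd2 ψ (x₁, x₂) - deriv φ1 x₂| < ε) ∧
    (∀ K : Set ℝ, K ⊆ Set.Ioo a b → IsCompact K →
      ∀ ε > 0, ∃ M : ℝ, ∀ x₁ ≥ M, ∀ x₂ ∈ K,
        |ψ (x₁, x₂) - φba (x₂ - a)| + |pd2 ψ (x₁, x₂) - deriv φba (x₂ - a)| < ε) := by
  obtain ⟨C, hψ⟩ := hLip
  obtain rfl : f = fun s => 6 * Q * (1 - 2 * κ s) := funext hf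
  obtain rfl : φ1 = cubicProfile Q := funext hφ1
  have hprofile : IsBVPSol Q (fun s => 6 * Q * (1 - 2 * κ s)) (1 - 0) (cubicProfile Q) := by
    simpa only [sub_zero] using isBVPSol_cubicProfile hQ hκ
  simpa only [sub_zero] using stmt17_general (continuousOn_nonlinearity_cubicProfile hQ hκ)
    (antitoneOn_nonlinearity_cubicProfile hQ hκ) hh₀.continuous hh₁.continuous hlt hup hdown hΩ hC2
    hψ.uniformContinuousOn hbd heq hΓ₀ hΓ₁ hprofile hφba
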